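/- Let F be a field of characteristic zero, V a finite-dimensional F-vector space, and M an automorphism of V with Jordan–Chevalley decomposition M = M_s + M_n. Let W be the weight filtration on V centered at w ∈ ℤ associated to M_n, and fix an integer j > 0. If ∧^j M = T + P is a Jordan–Chevalley decomposition of the automorphism ∧^j M of ∧^j V (T semisimple, P nilpotent, T ∘ P = P ∘ T), then the weight filtration on ∧^j V centered at w·j associated to P is the exterior power filtration ∧^j W, defined by (∧^j W)_i = Σ_{i₁+⋯+i_j=i} W_{i₁} ∧ ⋯ ∧ W_{i_j} (the span of wedges v₁ ∧ ⋯ ∧ v_j with v_k ∈ W_{i_k}). -/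

import Mathlib

/-- `W` is an ascending filtration on `V`, exhaustive and separated, which is the weight
filtration centered at `w` associated to the nilpotent endomorphism `N`. -/
def IsWeightFiltration {F V : Type*} [Field F] [AddCommGroup V] [Module F V]
    (N : V →ₗ[F] V) (w : ℤ) (W : ℤ → Submodule F V) : Prop :=
  Monotone W ∧
  (∃ a : ℤ, ∀ i ≤ a, W i = ⊥) ∧
  (∃ b : ℤ, ∀ i, b ≤ i → W i = ⊤) ∧
  (∀ i : ℤ, (W i).map N ≤ W (i - 2)) ∧
  (∀ α : ℤ, 0 < α →
    W (w - α) ≤ W (w - α - 1) ⊔ (W (w + α)).map (N ^ α.toNat) ∧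
    ∀ v ∈ W (w + α), (N ^ α.toNat) v ∈ W (w - α - 1) → v ∈ W (w + α - 1))

/-- The wedge `v₁ ∧ ⋯ ∧ v_j`, as an element of the `j`-th exterior power `⋀[F]^j V`. -/
def wedge (F : Type*) {V : Type*} [Field F] [AddCommGroup V] [Module F V] (j : ℕ)
    (v : Fin j → V) : ⋀[F]^j V :=
  ⟨ExteriorAlgebra.ιMulti F j v, ExteriorAlgebra.ιMulti_range F j (Set.mem_range_self v)⟩

/-- The exterior power filtration `∧^j W` on `⋀[F]^j V` associated to a filtration `W` on
`V`: `(∧^j W)_i` is the span of the wedges `v₁ ∧ ⋯ ∧ v_j` with `v_k ∈ W_{i_k}` and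
`i₁ + ⋯ + i_j = i`. -/
def extPowerFiltration (F : Type*) {V : Type*} [Field F] [AddCommGroup V] [Module F V]
    (j : ℕ) (W : ℤ → Submodule F V) (i : ℤ) : Submodule F (⋀[F]^j V) :=
  ⨆ c : {c : Fin j → ℤ // ∑ k, c k = i},
    Submodule.span F
      {x : ⋀[F]^j V | ∃ v : Fin j → V, (∀ k, v k ∈ W (c.1 k)) ∧ wedge F j v = x}

section WeightFil

variable {F V : Type*} [Field F] [AddCommGroup V] [Module F V]

lemma wf_pow_map {N : V →ₗ[F] V} {W : ℤ → Submodule F V}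
    (h : ∀ i : ℤ, (W i).map N ≤ W (i - 2)) (a : ℕ) (i : ℤ) (v : V) (hv : v ∈ W i) :
    (N ^ a) v ∈ W (i - 2 * a) := by
  induction a with
  | zero => simpa using hv
  | succ a ih =>
    rw [pow_succ', Module.End.mul_apply]
    have := h _ (Submodule.mem_map_of_mem ih)
    convert this using 2
    push_cast; ring

lemma wf_neg_eq {N : V →ₗ[F] V} {w : ℤ} {W : ℤ → Submodule F V}
    (h : IsWeightFiltration N w W) (a : ℕ) :
    W (w - a) = (W (w + a)).map (N ^ a) := by
  obtain ⟨hmono, ⟨lo, hlo⟩, -, hN, hL⟩ := h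
  have key : ∀ d a : ℕ, lo.natAbs + w.natAbs ≤ a + d → W (w - a) ≤ (W (w + a)).map (N ^ a) := by
    intro d
    induction d with
    | zero =>
      intro a ha
      rw [hlo (w - a) (by omega)]
      exact bot_le
    | succ d ih =>
      intro a ha
      rcases Nat.eq_zero_or_pos a with rfl | hpos
      · intro v hv
        exact ⟨v, by simpa using hv, by simp⟩
      · refine (hL a (by omega)).1.trans (sup_le ?_ ?_)
        · have := ih (a + 1) (by omega)
          have e : w - a - 1 = w - ((a + 1 : ℕ) : ℤ) := by push_cast; ring
          rw [e]
          refine this.trans ?_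
          rintro _ ⟨v, hv, rfl⟩
          refine ⟨N v, ?_, by rw [pow_succ]; rfl⟩
          have h1 := hN _ (Submodule.mem_map_of_mem hv)
          exact hmono (by push_cast; omega) h1
        · simp
  apply le_antisymm
  · exact key _ a (Nat.le_add_left _ _)
  · rintro _ ⟨v, hv, rfl⟩
    have := wf_pow_map hN a _ v hv
    convert this using 2
    ring

lemma wf_pos_eq {N : V →ₗ[F] V} {w : ℤ} {W : ℤ → Submodule F V}
    (h : IsWeightFiltration N w W) (a : ℕ) :
    W (w + a) = ((W (w + (a + 2 : ℕ))).map (N ^ (a + 2))).comap (N ^ (a + 1)) := by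
  rw [← wf_neg_eq h]
  obtain ⟨hmono, -, ⟨hi, hhi⟩, hN, hL⟩ := h
  ext v
  rw [Submodule.mem_comap]
  constructor
  · intro hv
    have := wf_pow_map hN (a + 1) _ v hv
    convert this using 2
    push_cast; ring
  · intro hv
    have key : ∀ d : ℕ, v ∈ W (w + a + d) → v ∈ W (w + a) := by
      intro d
      induction d with
      | zero => simp
      | succ d ih =>
        intro hd
        apply ih
        have h1 := (hL (a + d + 1 : ℕ) (by omega)).2 v (by convert hd using 2; push_cast; ring) ?_
        · convert h1 using 2; push_cast; ring
        · have h2 := wf_pow_map hN d _ _ hv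
          rw [← Module.End.mul_apply, ← pow_add] at h2
          have e : ((a + d + 1 : ℕ) : ℤ).toNat = d + (a + 1) := by omega
          rw [e]
          exact hmono (by push_cast; omega) h2
    apply key (hi.natAbs + w.natAbs)
    rw [hhi _ (by omega)]
    trivial

lemma wf_unique {N : V →ₗ[F] V} {w : ℤ} {W W' : ℤ → Submodule F V}
    (h : IsWeightFiltration N w W) (h' : IsWeightFiltration N w W') : W = W' := by
  have key : ∀ a : ℕ, W (w + a) = W' (w + a) := by
    obtain ⟨b, hb⟩ := h.2.2.1
    obtain ⟨b', hb'⟩ := h'.2.2.1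
    have : ∀ d a : ℕ, b.natAbs + b'.natAbs + w.natAbs ≤ a + d → W (w + a) = W' (w + a) := by
      intro d
      induction d with
      | zero => intro a ha; rw [hb _ (by omega), hb' _ (by omega)]
      | succ d ih =>
        intro a ha
        rw [wf_pos_eq h, wf_pos_eq h', ih (a + 2) (by omega)]
    intro a
    exact this _ a (Nat.le_add_left _ _)
  funext i
  rcases le_total w i with hi | hi
  · obtain ⟨a, rfl⟩ := Int.le.dest hi
    exact key a
  · obtain ⟨a, ha⟩ := Int.le.dest hi
    obtain rfl : i = w - a := by omega
    rw [wf_neg_eq h, wf_neg_eq h', key]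

lemma wf_commute {N S : V →ₗ[F] V} {w : ℤ} {W : ℤ → Submodule F V}
    (h : IsWeightFiltration N w W) (hc : Commute S N) (i : ℤ) (v : V) (hv : v ∈ W i) :
    S v ∈ W i := by
  have hcp : ∀ (a : ℕ) x, (N ^ a) (S x) = S ((N ^ a) x) := fun a x =>
    (LinearMap.congr_fun (hc.pow_right a).eq x).symm
  have key : ∀ (a : ℕ) v, v ∈ W (w + a) → S v ∈ W (w + a) := by
    obtain ⟨b, hb⟩ := h.2.2.1
    have : ∀ d a : ℕ, b.natAbs + w.natAbs ≤ a + d → ∀ v, v ∈ W (w + a) → S v ∈ W (w + a) := by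
      intro d
      induction d with
      | zero => intro a ha v _; rw [hb _ (by omega)]; trivial
      | succ d ih =>
        intro a ha v hv
        rw [wf_pos_eq h] at hv ⊢
        obtain ⟨y, hy, hyv⟩ := hv
        refine ⟨S y, ih (a + 2) (by omega) y hy, ?_⟩
        rw [hcp, hcp, hyv]
    intro a
    exact this _ a (Nat.le_add_left _ _)
  rcases le_total w i with hi | hi
  · obtain ⟨a, rfl⟩ := Int.le.dest hi
    exact key a v hv
  · obtain ⟨a, ha⟩ := Int.le.dest hi
    obtain rfl : i = w - a := by omega
    rw [wf_neg_eq h] at hv ⊢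
    obtain ⟨y, hy, rfl⟩ := hv
    exact ⟨S y, key a y hy, hcp _ _⟩

lemma wf_mul [FiniteDimensional F V] {Q T : V →ₗ[F] V} {w : ℤ} {W : ℤ → Submodule F V}
    (h : IsWeightFiltration Q w W) (hT : Function.Injective T) (hc : Commute T Q)
    (hTW : ∀ i, ∀ v ∈ W i, T v ∈ W i) : IsWeightFiltration (T * Q) w W := by
  have hTa : ∀ a : ℕ, Function.Injective (T ^ a) := by
    intro a
    rw [Module.End.coe_pow]
    exact hT.iterate a
  have hTWa : ∀ (a : ℕ) i, (W i).map (T ^ a) = W i := by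
    intro a i
    apply Submodule.eq_of_le_of_finrank_eq
    · rintro _ ⟨v, hv, rfl⟩
      induction a with
      | zero => simpa using hv
      | succ a ih => rw [pow_succ']; exact hTW _ _ ih
    · exact (LinearEquiv.finrank_eq (Submodule.equivMapOfInjective (T ^ a) (hTa a) (W i))).symm
  obtain ⟨hmono, hlo, hhi, hN, hL⟩ := h
  refine ⟨hmono, hlo, hhi, ?_, ?_⟩
  · rintro i _ ⟨v, hv, rfl⟩
    exact hTW _ _ (hN _ (Submodule.mem_map_of_mem hv))
  · intro α hα
    obtain ⟨h1, h2⟩ := hL α hα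
    rw [hc.mul_pow]
    constructor
    · rw [← hTWa α.toNat (w - α)]
      refine (Submodule.map_mono h1).trans ?_
      rw [Submodule.map_sup, hTWa]
      apply sup_le_sup le_rfl
      rintro _ ⟨_, ⟨v, hv, rfl⟩, rfl⟩
      exact ⟨v, hv, rfl⟩
    · intro v hv hv2
      apply h2 v hv
      rw [← hTWa α.toNat] at hv2
      obtain ⟨y, hy, hyv⟩ := hv2
      have := hTa _ hyv
      rwa [← this]

end WeightFil

section Sl2

variable {F X : Type*} [Field F] [AddCommGroup X] [Module F X]

/-- An `sl2`-triple of endomorphisms with `h` diagonalizable with integer eigenvalues. -/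
structure Sl2T (e f h : Module.End F X) : Prop where
  hf : h * f = f * h - 2 * f
  he : h * e = e * h + 2 * e
  ef : e * f = f * e + h
  top : ⨆ m : ℤ, h.eigenspace (m : F) = ⊤

/-- The filtration by sums of eigenspaces of `h`. -/
def hFil (h : Module.End F X) (i : ℤ) : Submodule F X :=
  ⨆ m : ℤ, ⨆ _ : m ≤ i, h.eigenspace (m : F)

lemma hFil_mono (h : Module.End F X) : Monotone (hFil h) := by
  intro i i' hi
  exact iSup_le fun m => iSup_le fun hm => le_iSup_of_le m (le_iSup_of_le (hm.trans hi) le_rfl)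

lemma eig_le_hFil (h : Module.End F X) {m i : ℤ} (hm : m ≤ i) :
    h.eigenspace (m : F) ≤ hFil h i := le_iSup_of_le m (le_iSup_of_le hm le_rfl)

lemma hFil_succ_le (h : Module.End F X) (i : ℤ) :
    hFil h i ≤ hFil h (i - 1) ⊔ h.eigenspace (i : F) := by
  refine iSup_le fun m => iSup_le fun hm => ?_
  rcases eq_or_lt_of_le hm with rfl | hm
  · exact le_sup_right
  · exact le_sup_of_le_left (eig_le_hFil h (by omega))

variable [CharZero F]

lemma eig_indep (h : Module.End F X) : iSupIndep fun m : ℤ => h.eigenspace (m : F) :=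
  h.eigenspaces_iSupIndep.comp Int.cast_injective

lemma eig_bound [FiniteDimensional F X] (h : Module.End F X) :
    ∃ B : ℕ, ∀ m : ℤ, B ≤ m.natAbs → h.eigenspace (m : F) = ⊥ := by
  have hfin : {m : ℤ | h.HasEigenvalue (m : F)}.Finite :=
    h.finite_hasEigenvalue.preimage Int.cast_injective.injOn
  obtain ⟨B, hB⟩ := (hfin.image Int.natAbs).bddAbove
  refine ⟨B + 1, fun m hm => ?_⟩
  by_contra hne
  have : m.natAbs ≤ B := hB ⟨m, hne, rfl⟩
  omega

lemma hFil_disj (h : Module.End F X) {m i : ℤ} (hm : i < m) :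
    Disjoint (h.eigenspace (m : F)) (hFil h i) := by
  refine (eig_indep h m).mono_right ?_
  exact iSup_le fun m' => iSup_le fun hm' => le_iSup_of_le m' (le_iSup_of_le (by omega) le_rfl)

namespace Sl2T

variable {e f h : Module.End F X}

lemma f_mem (t : Sl2T e f h) {m : ℤ} {v : X} (hv : v ∈ h.eigenspace (m : F)) :
    f v ∈ h.eigenspace ((m - 2 : ℤ) : F) := by
  rw [Module.End.mem_eigenspace_iff] at hv ⊢
  have := LinearMap.congr_fun t.hf v
  simp only [Module.End.mul_apply, LinearMap.sub_apply, hv, map_smul] at this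
  rw [this, Module.End.ofNat_apply]
  push_cast
  module

lemma e_mem (t : Sl2T e f h) {m : ℤ} {v : X} (hv : v ∈ h.eigenspace (m : F)) :
    e v ∈ h.eigenspace ((m + 2 : ℤ) : F) := by
  rw [Module.End.mem_eigenspace_iff] at hv ⊢
  have := LinearMap.congr_fun t.he v
  simp only [Module.End.mul_apply, LinearMap.add_apply, hv, map_smul] at this
  rw [this, Module.End.ofNat_apply]
  push_cast
  module

lemma fpow_mem (t : Sl2T e f h) (a : ℕ) {m : ℤ} {v : X} (hv : v ∈ h.eigenspace (m : F)) :
    (f ^ a) v ∈ h.eigenspace ((m - 2 * a : ℤ) : F) := by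
  induction a with
  | zero => simpa using hv
  | succ a ih =>
    rw [pow_succ', Module.End.mul_apply]
    convert t.f_mem ih using 2
    push_cast; ring

lemma symm (t : Sl2T e f h) : Sl2T f e (-h) where
  hf := by rw [neg_mul, t.he]; noncomm_ring
  he := by rw [neg_mul, t.hf]; noncomm_ring
  ef := by rw [t.ef]; abel
  top := by
    rw [eq_top_iff, ← t.top]
    refine iSup_le fun m => le_iSup_of_le (-m) ?_
    intro v hv
    rw [Module.End.mem_eigenspace_iff] at hv ⊢
    simp [hv]

/-- The Casimir element. -/
def cas (e f h : Module.End F X) : Module.End F X := 4 * (f * e) + h * h + 2 * h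

lemma cas_e (t : Sl2T e f h) : Commute (cas e f h) e := by
  have h1 := t.ef
  have h2 := t.he
  have h3 : h = e * f - f * e := by rw [h1]; abel
  unfold cas Commute SemiconjBy
  have a1 : h * h * e = e * h * h + 4 * (e * h) + 4 * e := by
    rw [mul_assoc, h2, mul_add, ← mul_assoc, h2]
    have : h * (2 * e) = 2 * (h * e) := by noncomm_ring
    rw [this, h2]; noncomm_ring
  have a2 : f * e * e = e * f * e - e * h - 2 * e := by
    have : f * e = e * f - h := by rw [h1]; abel
    rw [this, sub_mul, h2]; noncomm_ring
  have : (4 * (f * e) + h * h + 2 * h) * e = 4 * (f * e * e) + h * h * e + 2 * (h * e) := by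
    noncomm_ring
  rw [this, a1, a2, h2]
  noncomm_ring

lemma cas_f (t : Sl2T e f h) : Commute (cas e f h) f := by
  have := t.symm.cas_e
  have e1 : cas f e (-h) = cas e f h := by
    unfold cas
    rw [t.ef]; noncomm_ring
  rwa [e1] at this

lemma raise [FiniteDimensional F X] (t : Sl2T e f h) (s : ℤ) (m : ℤ) (v : X)
    (hv : v ∈ h.eigenspace (m : F)) (hm : 0 ≤ m) (hs : s.natAbs < m + 1)
    (hc : cas e f h v = ((s : F) ^ 2 - 1) • v) : v = 0 := by
  obtain ⟨B, hB⟩ := eig_bound h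
  have key : ∀ (d : ℕ) (m : ℤ) (v : X), (B : ℤ) ≤ m + d → 
      v ∈ h.eigenspace (m : F) → 0 ≤ m → s.natAbs < m + 1 → 
      cas e f h v = ((s : F) ^ 2 - 1) • v → v = 0 := by
    intro d
    induction d with
    | zero =>
      intro m v hd hv hm _ _
      rw [hB m (by omega)] at hv
      simpa using hv
    | succ d ih =>
      intro m v hd hv hm hs hc
      have h0 : e v = 0 := by
        refine ih (m + 2) (e v) (by push_cast at hd; omega) (t.e_mem hv) (by omega) (by omega) ?_
        have := LinearMap.congr_fun t.cas_e.eq v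
        simp only [Module.End.mul_apply] at this
        rw [this, hc, map_smul]
      rw [Module.End.mem_eigenspace_iff] at hv
      have h2 : cas e f h v = ((m : F) ^ 2 + 2 * m) • v := by
        simp only [cas, LinearMap.add_apply, Module.End.mul_apply, h0, hv, map_smul, map_zero,
          Module.End.ofNat_apply]
        module
      rw [h2, ← sub_eq_zero, ← sub_smul, smul_eq_zero] at hc
      rcases hc with hc | hc
      · exfalso
        have h3 : (((m + 1) ^ 2 - s ^ 2 : ℤ) : F) = 0 := by
          push_cast; linear_combination hc
        rw [Int.cast_eq_zero] at h3
        have h4 : |s| < |m + 1| := by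
          rw [Int.abs_eq_natAbs, abs_of_pos (by omega)]; exact hs
        have := sq_lt_sq.mpr h4
        omega
      · exact hc
  exact key B m v (by omega) hv hm hs hc

lemma inj [FiniteDimensional F X] (t : Sl2T e f h) (a : ℕ) (k : ℕ) (hk : k ≤ a) (v : X)
    (hv : v ∈ h.eigenspace ((a : ℤ) : F)) (hfv : (f ^ k) v = 0) : v = 0 := by
  induction k generalizing v with
  | zero => simpa using hfv
  | succ k ih =>
    let s : ℤ := a - 2 * k - 1
    have hw : cas e f h v - ((s : F) ^ 2 - 1) • v = 0 := by
      apply ih (by omega)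
      · refine sub_mem ?_ (Submodule.smul_mem _ _ hv)
        have h1 : f (e v) ∈ h.eigenspace ((a : ℤ) : F) := by
          have := t.f_mem (t.e_mem hv)
          convert this using 3
          ring
        simp only [cas, LinearMap.add_apply, Module.End.mul_apply, Module.End.ofNat_apply]
        have hv' := Module.End.mem_eigenspace_iff.mp hv
        rw [hv', map_smul, hv']
        refine add_mem (add_mem ?_ ?_) ?_
        · exact nsmul_mem h1 4
        · exact Submodule.smul_mem _ _ (Submodule.smul_mem _ _ hv)
        · exact nsmul_mem (Submodule.smul_mem _ _ hv) 2
      · have hu := t.fpow_mem k hv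
        rw [Module.End.mem_eigenspace_iff] at hu
        have hcomm := LinearMap.congr_fun (t.cas_f.pow_right k).eq v
        simp only [Module.End.mul_apply] at hcomm
        rw [map_sub, map_smul, ← hcomm]
        rw [pow_succ', Module.End.mul_apply] at hfv
        have hef := LinearMap.congr_fun t.ef ((f ^ k) v)
        simp only [Module.End.mul_apply, LinearMap.add_apply, hfv, map_zero, hu] at hef
        have hfe : f (e ((f ^ k) v)) = - (((a - 2 * k : ℤ) : F) • (f ^ k) v) :=
          eq_neg_of_add_eq_zero_left hef.symm
        simp only [cas, LinearMap.add_apply, Module.End.mul_apply, Module.End.ofNat_apply, hu,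
          map_smul, hfe, s]
        push_cast
        module
    refine t.raise s a v hv (by omega) (by omega) (sub_eq_zero.mp hw)

lemma surj [FiniteDimensional F X] (t : Sl2T e f h) (a : ℕ) :
    (h.eigenspace ((a : ℤ) : F)).map (f ^ a) = h.eigenspace ((-a : ℤ) : F) := by
  have key : ∀ {e f h : Module.End F X}, Sl2T e f h →
      (h.eigenspace ((a : ℤ) : F)).map (f ^ a) ≤ h.eigenspace ((-a : ℤ) : F) ∧
      Module.finrank F ((h.eigenspace ((a : ℤ) : F)).map (f ^ a)) =
        Module.finrank F (h.eigenspace ((a : ℤ) : F)) := by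
    intro e f h t
    constructor
    · rintro _ ⟨v, hv, rfl⟩
      convert t.fpow_mem a hv using 3
      ring
    · have hinj : Function.Injective ((f ^ a).domRestrict (h.eigenspace ((a : ℤ) : F))) := by
        rw [injective_iff_map_eq_zero]
        rintro ⟨v, hv⟩ hv0
        exact Subtype.ext (t.inj a a le_rfl v hv hv0)
      rw [← LinearMap.finrank_range_of_inj hinj, LinearMap.range_domRestrict]
  have hneg : ∀ m : ℤ, (-h).eigenspace ((-m : ℤ) : F) = h.eigenspace (m : F) := by
    intro m; ext v
    simp [Module.End.mem_eigenspace_iff]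
  have k1 := key t
  have k2 := key t.symm
  apply Submodule.eq_of_le_of_finrank_le k1.1
  rw [k1.2]
  have := Submodule.finrank_mono k2.1
  rw [k2.2, hneg] at this
  rw [← hneg (-a), neg_neg]
  exact this

lemma weightFil [FiniteDimensional F X] (t : Sl2T e f h) (w : ℤ) (Q : Module.End F X)
    (G : ℤ → Submodule F X) (hG : ∀ i, G i = hFil h (i - w))
    (hQ : ∀ i, ∀ v ∈ G i, (Q - f) v ∈ G (i - 3)) : IsWeightFiltration Q w G := by
  have hmono : Monotone G := by
    intro i i' hi
    rw [hG, hG]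
    exact hFil_mono h (by omega)
  have hfG : ∀ i, (G i).map f ≤ G (i - 2) := by
    intro i
    rw [hG, hG, Submodule.map_le_iff_le_comap]
    refine iSup_le fun m => iSup_le fun hm => ?_
    intro v hv
    exact eig_le_hFil h (by omega) (t.f_mem hv)
  have hQG : ∀ i, (G i).map Q ≤ G (i - 2) := by
    rintro i _ ⟨v, hv, rfl⟩
    have : Q v = (Q - f) v + f v := by simp
    rw [this]
    exact add_mem (hmono (by omega) (hQ i v hv)) (hfG i (Submodule.mem_map_of_mem hv))
  have hpow : ∀ (a : ℕ) i, ∀ v ∈ G i, (Q ^ a - f ^ a) v ∈ G (i - 2 * a - 1) := by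
    intro a
    induction a with
    | zero => intro i v _; simp
    | succ a ih =>
      intro i v hv
      have : Q ^ (a + 1) - f ^ (a + 1) = Q * (Q ^ a - f ^ a) + (Q - f) * f ^ a := by
        rw [pow_succ', pow_succ']; noncomm_ring
      rw [this]
      refine add_mem (hmono ?_ (hQG _ (Submodule.mem_map_of_mem (ih i v hv))))
        (hmono ?_ (hQ _ _ (wf_pow_map hfG a i v hv)))
      · push_cast; omega
      · push_cast; omega
  obtain ⟨B, hB⟩ := eig_bound h
  refine ⟨hmono, ⟨w - B, fun i hi => ?_⟩, ⟨w + B, fun i hi => ?_⟩, hQG, fun α hα => ?_⟩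
  · rw [hG, eq_bot_iff]
    refine iSup_le fun m => iSup_le fun hm => ?_
    rw [hB m (by omega)]
  · rw [hG, eq_top_iff, ← t.top]
    refine iSup_le fun m => ?_
    by_cases hm : m ≤ i - w
    · exact eig_le_hFil h hm
    · rw [hB m (by omega)]; exact bot_le
  · lift α to ℕ using hα.le
    rw [Int.toNat_natCast]
    have e1 : G (w + α) ≤ G (w + α - 1) ⊔ h.eigenspace ((α : ℤ) : F) := by
      have := hFil_succ_le h α
      rw [hG, hG]
      convert this using 3 <;> ring
    have e2 : G (w - α) ≤ G (w - α - 1) ⊔ h.eigenspace ((-α : ℤ) : F) := by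
      have := hFil_succ_le h (-α)
      rw [hG, hG]
      convert this using 3 <;> ring
    have e3 : h.eigenspace ((α : ℤ) : F) ≤ G (w + α) := by
      rw [hG]; exact eig_le_hFil h (by omega)
    constructor
    · refine e2.trans (sup_le le_sup_left ?_)
      rw [← t.surj]
      rintro _ ⟨y, hy, rfl⟩
      have : (f ^ α) y = - (Q ^ α - f ^ α) y + (Q ^ α) y := by simp
      rw [this]
      refine Submodule.add_mem_sup (neg_mem ?_) (Submodule.mem_map_of_mem (e3 hy))
      exact hmono (by omega) (hpow α _ y (e3 hy))
    · intro v hv hQv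
      obtain ⟨v', hv', y, hy, rfl⟩ := Submodule.mem_sup.mp (e1 hv)
      have hfy : (f ^ α) y ∈ G (w - α - 1) := by
        have : (f ^ α) y = (Q ^ α) (v' + y) - (Q ^ α - f ^ α) (v' + y) - (f ^ α) v' := by
          simp
        rw [this]
        refine sub_mem (sub_mem hQv (hmono (by omega) (hpow α _ _ hv))) ?_
        exact hmono (by omega) (wf_pow_map hfG α _ _ hv')
      have hfy2 : (f ^ α) y ∈ h.eigenspace ((-α : ℤ) : F) := by
        rw [← t.surj]; exact Submodule.mem_map_of_mem hy
      rw [hG] at hfy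
      have h0 := Submodule.disjoint_def.mp
        (hFil_disj h (m := -α) (i := w - α - 1 - w) (by omega)) _ hfy2 hfy
      have := t.inj α α le_rfl y hy h0
      rw [this, add_zero]
      exact hv'

end Sl2T

end Sl2

section JM

open Polynomial in
lemma quot_basis (F : Type*) [Field F] (k : ℕ) :
    ∃ b : Module.Basis (Fin k) F (F[X] ⧸ (F[X] ∙ (X : F[X]) ^ k)),
      ∀ l, b l = Submodule.Quotient.mk (X ^ (l : ℕ)) := by
  have hd : ((X : F[X]) ^ k).natDegree = k := natDegree_X_pow k
  let pb := AdjoinRoot.powerBasis' (monic_X_pow (R := F) k)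
  refine ⟨pb.basis.reindex (finCongr hd), fun l => ?_⟩
  have h1 : (pb.basis.reindex (finCongr hd)) l = AdjoinRoot.root ((X : F[X]) ^ k) ^ (l : ℕ) := by
    rw [Module.Basis.reindex_apply, pb.basis_eq_pow]
    rfl
  refine h1.trans ?_
  rw [← AdjoinRoot.mk_X, ← map_pow]
  rfl

open Polynomial in
lemma exists_jordan {F V : Type*} [Field F] [AddCommGroup V] [Module F V]
    [FiniteDimensional F V] (n : Module.End F V) (hn : IsNilpotent n) :
    ∃ (d : ℕ) (k : Fin d → ℕ) (vec : Fin d → ℕ → V),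
      (∀ i l, n (vec i l) = vec i (l + 1)) ∧ (∀ i, vec i (k i) = 0) ∧
      ∃ B : Module.Basis (Σ i, Fin (k i)) F V, ∀ i l, B ⟨i, l⟩ = vec i l := by
  classical
  have htors : Module.IsTorsion' (Module.AEval' n) (Submonoid.powers (X : F[X])) := by
    intro x
    obtain ⟨N, hN⟩ := hn
    refine ⟨⟨X ^ N, N, rfl⟩, ?_⟩
    obtain ⟨v, rfl⟩ := (Module.AEval'.of n).surjective x
    change (X ^ N : F[X]) • (Module.AEval'.of n v) = 0
    rw [Module.AEval.X_pow_smul_of, hN]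
    simp
  obtain ⟨d, k, ⟨φ⟩⟩ := Module.torsion_by_prime_power_decomposition
    (Polynomial.irreducible_X (R := F)) htors
  let φ' : Module.AEval' n ≃ₗ[F[X]] (∀ i : Fin d, F[X] ⧸ (F[X] ∙ (X : F[X]) ^ k i)) :=
    φ.trans (DirectSum.linearEquivFunOnFintype _ _ _)
  let ψ : V ≃ₗ[F] (∀ i : Fin d, F[X] ⧸ (F[X] ∙ (X : F[X]) ^ k i)) :=
    (Module.AEval'.of n).trans (φ'.restrictScalars F)
  have hψ : ∀ y, n (ψ.symm y) = ψ.symm ((X : F[X]) • y) := by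
    intro y
    apply ψ.injective
    rw [LinearEquiv.apply_symm_apply]
    change φ' (Module.AEval'.of n (n • ψ.symm y)) = _
    rw [← Module.AEval.X_smul_of, map_smul]
    congr 1
    exact ψ.apply_symm_apply y
  choose b hb using fun i => quot_basis F (k i)
  refine ⟨d, k, fun i l => ψ.symm (Pi.single i (Submodule.Quotient.mk (X ^ l))), ?_, ?_,
    (Pi.basis b).map ψ.symm, ?_⟩
  · intro i l
    rw [hψ, ← Pi.single_smul, ← Submodule.Quotient.mk_smul, smul_eq_mul, ← pow_succ']
  · intro i
    have : (Submodule.Quotient.mk (X ^ k i) : F[X] ⧸ (F[X] ∙ (X : F[X]) ^ k i)) = 0 := by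
      rw [Submodule.Quotient.mk_eq_zero]
      exact Submodule.mem_span_singleton_self _
    simp only [this, Pi.single_zero, map_zero]
  · intro i l
    rw [Module.Basis.map_apply, Pi.basis_apply, hb]

lemma exists_sl2 {F V : Type*} [Field F] [AddCommGroup V] [Module F V]
    [FiniteDimensional F V] (n : Module.End F V) (hn : IsNilpotent n) :
    ∃ e h : Module.End F V, Sl2T e n h := by
  obtain ⟨d, k, vec, hvec, hk, B, hB⟩ := exists_jordan n hn
  let h : Module.End F V := B.constr F fun x => ((k x.1 - 1 - 2 * (x.2 : ℕ) : ℤ) : F) • B x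
  let e : Module.End F V := B.constr F fun x =>
    (((x.2 : ℕ) * (k x.1 - (x.2 : ℕ)) : ℤ) : F) • vec x.1 ((x.2 : ℕ) - 1)
  have hh : ∀ i l, l ≤ k i → h (vec i l) = ((k i - 1 - 2 * l : ℤ) : F) • vec i l := by
    intro i l hl
    rcases eq_or_lt_of_le hl with rfl | hl
    · simp [hk]
    · have := hB i ⟨l, hl⟩
      simp only at this
      rw [← this]
      simp only [h, Module.Basis.constr_basis]
  have he : ∀ i l, l ≤ k i → e (vec i l) = ((l * (k i - l) : ℤ) : F) • vec i (l - 1) := by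
    intro i l hl
    rcases eq_or_lt_of_le hl with rfl | hl
    · simp [hk]
    · have := hB i ⟨l, hl⟩
      simp only at this
      rw [← this]
      simp only [e, Module.Basis.constr_basis]
  refine ⟨e, h, ?_, ?_, ?_, ?_⟩
  · refine B.ext fun ⟨i, l, hl⟩ => ?_
    simp only [hB, Module.End.mul_apply, LinearMap.sub_apply, Module.End.ofNat_apply, hvec,
      hh i l hl.le, hh i (l + 1) hl, map_smul]
    push_cast
    module
  · refine B.ext fun ⟨i, l, hl⟩ => ?_
    simp only [hB, Module.End.mul_apply, LinearMap.add_apply, Module.End.ofNat_apply,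
      hh i l hl.le, he i l hl.le, hh i (l - 1) (by omega), map_smul]
    rcases l with _ | l
    · simp
    · simp only [Nat.add_sub_cancel]
      push_cast
      module
  · refine B.ext fun ⟨i, l, hl⟩ => ?_
    simp only [hB, Module.End.mul_apply, LinearMap.add_apply, hvec,
      hh i l hl.le, he i l hl.le, he i (l + 1) hl, map_smul]
    rcases l with _ | l
    · simp
    · simp only [Nat.add_sub_cancel]
      push_cast
      module
  · rw [eq_top_iff, ← B.span_eq, Submodule.span_le]
    rintro _ ⟨⟨i, l, hl⟩, rfl⟩
    refine (le_iSup (fun m : ℤ => h.eigenspace (m : F)) (k i - 1 - 2 * l)) ?_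
    rw [Module.End.mem_eigenspace_iff, hB, hh i l hl.le]

end JM

section Ext

variable {F V : Type*} [Field F] [AddCommGroup V] [Module F V]

lemma wedge_eq (j : ℕ) (v : Fin j → V) : wedge F j v = exteriorPower.ιMulti F j v := rfl

lemma ext_hom_ext {j : ℕ} {Y : Type*} [AddCommGroup Y] [Module F Y]
    {A B : ⋀[F]^j V →ₗ[F] Y} (h : ∀ v, A (wedge F j v) = B (wedge F j v)) : A = B := by
  apply exteriorPower.linearMap_ext
  ext v
  exact h v

/-- Multilinear maps and spans. -/
lemma multi_span {j : ℕ} {Y : Type*} [AddCommGroup Y] [Module F Y]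
    (φ : MultilinearMap F (fun _ : Fin j => V) Y) (G : Submodule F Y) (S : Fin j → Set V)
    (h : ∀ u : Fin j → V, (∀ k, u k ∈ S k) → φ u ∈ G)
    (v : Fin j → V) (hv : ∀ k, v k ∈ Submodule.span F (S k)) : φ v ∈ G := by
  classical
  have key : ∀ (A : Finset (Fin j)) (v : Fin j → V), (∀ k ∈ A, v k ∈ Submodule.span F (S k)) →
      (∀ k ∉ A, v k ∈ S k) → φ v ∈ G := by
    intro A
    induction A using Finset.induction_on with
    | empty => intro v _ hv; exact h v fun k => hv k (by simp)
    | insert k A hk ih =>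
      intro v hv hv'
      have h1 : ∀ x ∈ Submodule.span F (S k), φ (Function.update v k x) ∈ G := by
        intro x hx
        induction hx using Submodule.span_induction with
        | mem x hx =>
          apply ih
          · intro l hl
            rw [Function.update_of_ne (by rintro rfl; exact hk hl)]
            exact hv l (Finset.mem_insert_of_mem hl)
          · intro l hl
            by_cases hlk : l = k
            · subst hlk; simpa using hx
            · rw [Function.update_of_ne hlk]
              exact hv' l (by simp [hlk, hl])
        | zero => rw [φ.map_update_zero]; exact zero_mem _
        | add x y _ _ hx hy => rw [φ.map_update_add]; exact add_mem hx hy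
        | smul c x _ hx => rw [φ.map_update_smul]; exact Submodule.smul_mem _ _ hx
      have := h1 (v k) (hv k (Finset.mem_insert_self _ _))
      rwa [Function.update_eq_self] at this
  exact key Finset.univ v (fun k _ => hv k) (by simp)

lemma wedge_mem_ext {j : ℕ} {W : ℤ → Submodule F V} (c : Fin j → ℤ) {i : ℤ} (hc : ∑ k, c k = i)
    (v : Fin j → V) (hv : ∀ k, v k ∈ W (c k)) : wedge F j v ∈ extPowerFiltration F j W i := by
  unfold extPowerFiltration
  exact Submodule.mem_iSup_of_mem ⟨c, hc⟩ (Submodule.subset_span ⟨v, hv, rfl⟩)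

lemma ext_le_iff {j : ℕ} {W : ℤ → Submodule F V} {i : ℤ} {G : Submodule F (⋀[F]^j V)} :
    extPowerFiltration F j W i ≤ G ↔
      ∀ c : Fin j → ℤ, ∑ k, c k = i → ∀ v : Fin j → V, (∀ k, v k ∈ W (c k)) → wedge F j v ∈ G := by
  constructor
  · intro h c hc v hv
    exact h (wedge_mem_ext c hc v hv)
  · intro h
    refine iSup_le fun c => Submodule.span_le.mpr ?_
    rintro _ ⟨v, hv, rfl⟩
    exact h c.1 c.2 v hv

lemma ext_mono {j : ℕ} (hj : 0 < j) {W : ℤ → Submodule F V} (hW : Monotone W) :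
    Monotone (extPowerFiltration F j W) := by
  intro i i' hi
  rw [ext_le_iff]
  intro c hc v hv
  refine wedge_mem_ext (fun k => c k + if k = ⟨0, hj⟩ then i' - i else 0) ?_ v fun k => ?_
  · simp [Finset.sum_add_distrib, hc]
  · refine hW ?_ (hv k)
    split_ifs <;> omega

lemma derAlt_aux [CharZero F] {j : ℕ} {Y : Type*} [AddCommGroup Y] [Module F Y]
    (ω : V [⋀^Fin j]→ₗ[F] Y) (a : Module.End F V) (v : Fin j → V) (p q : Fin j)
    (hpq : v p = v q) (hne : p ≠ q) :
    ∑ k, ω (fun l => (if l = k then a else LinearMap.id) (v l)) = 0 := by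
  let t : Fin j → Y := fun k => ω (fun l => (if l = k then a else LinearMap.id) (v l))
  change ∑ k, t k = 0
  have hv : ∀ l, v (Equiv.swap p q l) = v l := by
    intro l
    rw [Equiv.swap_apply_def]
    split_ifs with h1 h2
    · rw [h1, hpq]
    · rw [h2, hpq]
    · rfl
  have ht : ∀ k, t (Equiv.swap p q k) = - t k := by
    intro k
    have := ω.map_swap (fun l => (if l = k then a else LinearMap.id) (v l)) hne
    simp only [t]
    rw [← this]
    congr 1
    funext l
    simp only [Function.comp_apply, hv]
    have : (l = Equiv.swap p q k) ↔ (Equiv.swap p q l = k) := by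
      rw [Equiv.swap_apply_eq_iff]
    simp only [this]
  have h2 : ∑ k, t k = - ∑ k, t k := by
    conv_lhs => rw [← Equiv.sum_comp (Equiv.swap p q)]
    simp only [ht, Finset.sum_neg_distrib]
  have h3 : (2 : F) • ∑ k, t k = 0 := by
    rw [two_smul]
    nth_rewrite 1 [h2]
    simp
  exact (smul_eq_zero.mp h3).resolve_left two_ne_zero

/-- The derivation, as an alternating map. -/
noncomputable def derAlt [CharZero F] {j : ℕ} {Y : Type*} [AddCommGroup Y] [Module F Y]
    (ω : V [⋀^Fin j]→ₗ[F] Y) (a : Module.End F V) : V [⋀^Fin j]→ₗ[F] Y :=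
  { (∑ k : Fin j, ω.toMultilinearMap.compLinearMap
      (fun l => if l = k then a else LinearMap.id) :
        MultilinearMap F (fun _ : Fin j => V) Y) with
    map_eq_zero_of_eq' := by
      intro v p q hpq hne
      have := derAlt_aux ω a v p q hpq hne
      simpa using this }

lemma derAlt_apply [CharZero F] {j : ℕ} {Y : Type*} [AddCommGroup Y] [Module F Y]
    (ω : V [⋀^Fin j]→ₗ[F] Y) (a : Module.End F V) (v : Fin j → V) :
    derAlt ω a v = ∑ k, ω (Function.update v k (a (v k))) := by
  have : derAlt ω a v = ∑ k, ω (fun l => (if l = k then a else LinearMap.id) (v l)) := by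
    change (∑ k : Fin j, ω.toMultilinearMap.compLinearMap
      (fun l => if l = k then a else LinearMap.id) :
        MultilinearMap F (fun _ : Fin j => V) Y) v = _
    simp
  rw [this]
  refine Finset.sum_congr rfl fun k _ => ?_
  congr 1
  funext l
  by_cases h : l = k
  · subst h; simp
  · simp [h]

/-- The derivation on the exterior power. -/
noncomputable def der [CharZero F] (j : ℕ) (a : Module.End F V) : Module.End F (⋀[F]^j V) :=
  exteriorPower.alternatingMapLinearEquiv (derAlt (exteriorPower.ιMulti F j) a)

lemma der_wedge [CharZero F] (j : ℕ) (a : Module.End F V) (v : Fin j → V) :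
    der j a (wedge F j v) = ∑ k, wedge F j (Function.update v k (a (v k))) := by
  unfold der
  rw [wedge_eq, exteriorPower.alternatingMapLinearEquiv_apply_ιMulti, derAlt_apply]
  rfl

lemma der_comm [CharZero F] (j : ℕ) (a b : Module.End F V) :
    der j a * der j b = der j b * der j a + der j (a * b - b * a) := by
  apply ext_hom_ext
  intro v
  simp only [Module.End.mul_apply, LinearMap.add_apply, der_wedge, map_sum]
  conv_rhs => rw [Finset.sum_comm]
  rw [← Finset.sum_add_distrib]
  refine Finset.sum_congr rfl fun k _ => ?_
  rw [← sub_eq_iff_eq_add', ← Finset.sum_sub_distrib, Finset.sum_eq_single k]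
  · simp only [wedge_eq, Function.update_self, Function.update_idem, LinearMap.sub_apply,
      Module.End.mul_apply]
    exact ((exteriorPower.ιMulti F j).map_update_sub v k _ _).symm
  · intro l _ hl
    rw [sub_eq_zero, Function.update_of_ne hl, Function.update_of_ne hl.symm,
      Function.update_comm hl.symm]
  · simp

lemma der_add [CharZero F] (j : ℕ) (a b : Module.End F V) :
    der j (a + b) = der j a + der j b := by
  apply ext_hom_ext
  intro v
  rw [LinearMap.add_apply, der_wedge, der_wedge, der_wedge, ← Finset.sum_add_distrib]
  exact Finset.sum_congr rfl fun k _ => (exteriorPower.ιMulti F j).map_update_add v k _ _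

lemma der_neg [CharZero F] (j : ℕ) (a : Module.End F V) : der j (-a) = - der j a := by
  apply ext_hom_ext
  intro v
  rw [LinearMap.neg_apply, der_wedge, der_wedge, ← Finset.sum_neg_distrib]
  exact Finset.sum_congr rfl fun k _ => (exteriorPower.ιMulti F j).map_update_neg v k _

lemma der_eig [CharZero F] {j : ℕ} (h : Module.End F V) (d : Fin j → ℤ) (v : Fin j → V)
    (hv : ∀ k, v k ∈ h.eigenspace (d k : F)) :
    wedge F j v ∈ (der j h).eigenspace ((∑ k, d k : ℤ) : F) := by
  rw [Module.End.mem_eigenspace_iff, der_wedge]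
  push_cast
  rw [Finset.sum_smul]
  refine Finset.sum_congr rfl fun k _ => ?_
  rw [Module.End.mem_eigenspace_iff.mp (hv k), wedge_eq, wedge_eq,
    (exteriorPower.ιMulti F j).map_update_smul, Function.update_eq_self]

lemma indep_eq {ι Y : Type*} [AddCommGroup Y] [Module F Y] {E A : ι → Submodule F Y}
    (hE : iSupIndep E) (hA : ∀ i, A i ≤ E i) (ht : ⨆ i, A i = ⊤) (i : ι) : E i ≤ A i := by
  intro x hx
  have h1 : (⊤ : Submodule F Y) ≤ A i ⊔ ⨆ (l) (_ : l ≠ i), E l := by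
    rw [← ht]
    refine iSup_le fun l => ?_
    by_cases hl : l = i
    · subst hl; exact le_sup_left
    · exact le_sup_of_le_right (le_iSup_of_le l (le_iSup_of_le hl (hA l)))
  obtain ⟨y, hy, z, hz, rfl⟩ := Submodule.mem_sup.mp (h1 (Submodule.mem_top (x := x)))
  have hz' : z ∈ E i := by
    have := sub_mem hx (hA i hy)
    rwa [add_sub_cancel_left] at this
  rw [Submodule.disjoint_def.mp (hE i) z hz' hz, add_zero]
  exact hy

/-- The span of wedges of eigenvectors with total weight `m`. -/
def eigSpan (F : Type*) {V : Type*} [Field F] [AddCommGroup V] [Module F V]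
    (j : ℕ) (h : Module.End F V) (m : ℤ) : Submodule F (⋀[F]^j V) :=
  Submodule.span F {x | ∃ (d : Fin j → ℤ) (v : Fin j → V), ∑ k, d k = m ∧
    (∀ k, v k ∈ h.eigenspace (d k : F)) ∧ wedge F j v = x}

lemma iSup_span_union {Y : Type*} [AddCommGroup Y] [Module F Y] (h : Module.End F Y)
    (p : ℤ → Prop) :
    ⨆ m : ℤ, ⨆ _ : p m, h.eigenspace (m : F) =
      Submodule.span F {y | ∃ m, p m ∧ y ∈ h.eigenspace (m : F)} := by
  apply le_antisymm
  · exact iSup_le fun m => iSup_le fun hm => fun y hy => Submodule.subset_span ⟨m, hm, hy⟩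
  · rw [Submodule.span_le]
    rintro y ⟨m, hm, hy⟩
    exact Submodule.mem_iSup_of_mem m (Submodule.mem_iSup_of_mem hm hy)

lemma eigSpan_top (j : ℕ) (h : Module.End F V) (ht : ⨆ m : ℤ, h.eigenspace (m : F) = ⊤) :
    ⨆ m, eigSpan F j h m = ⊤ := by
  rw [eq_top_iff, ← exteriorPower.ιMulti_span F j V, Submodule.span_le]
  rintro _ ⟨v, rfl⟩
  refine multi_span (exteriorPower.ιMulti F j).toMultilinearMap _
    (fun _ => {y | ∃ m : ℤ, True ∧ y ∈ h.eigenspace (m : F)}) ?_ v ?_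
  · intro u hu
    choose d _ hd using hu
    exact Submodule.mem_iSup_of_mem (∑ k, d k) (Submodule.subset_span ⟨d, u, rfl, hd, rfl⟩)
  · intro k
    rw [← iSup_span_union]
    simp [ht]

lemma eig_der_eq [CharZero F] (j : ℕ) (h : Module.End F V)
    (ht : ⨆ m : ℤ, h.eigenspace (m : F) = ⊤) (m : ℤ) :
    (der j h).eigenspace (m : F) = eigSpan F j h m := by
  have hle : ∀ m, eigSpan F j h m ≤ (der j h).eigenspace (m : F) := by
    intro m
    refine Submodule.span_le.mpr ?_
    rintro _ ⟨d, v, rfl, hv, rfl⟩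
    exact der_eig h d v hv
  exact le_antisymm (indep_eq (eig_indep (der j h)) hle (eigSpan_top j h ht) m) (hle m)

lemma der_sl2 [CharZero F] (j : ℕ) {e f h : Module.End F V} (t : Sl2T e f h) :
    Sl2T (der j e) (der j f) (der j h) where
  hf := by
    rw [der_comm, t.hf, show f * h - 2 * f - f * h = -f + -f by noncomm_ring, der_add]
    have := der_neg j f
    rw [this]
    noncomm_ring
  he := by
    rw [der_comm, t.he, show e * h + 2 * e - e * h = e + e by noncomm_ring, der_add]
    noncomm_ring
  ef := by
    rw [der_comm, t.ef, show f * e + h - f * e = h by abel]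
  top := by
    simp only [eig_der_eq j h t.top]
    exact eigSpan_top j h t.top

lemma ext_eq_hFil [CharZero F] {j : ℕ} (hj : 0 < j) {h : Module.End F V}
    (ht : ⨆ m : ℤ, h.eigenspace (m : F) = ⊤)
    (w : ℤ) {W : ℤ → Submodule F V} (hW : ∀ i, W i = hFil h (i - w)) (i : ℤ) :
    extPowerFiltration F j W i = hFil (der j h) (i - w * j) := by
  have hmono : Monotone W := by
    intro i i' hi
    rw [hW, hW]
    exact hFil_mono h (by omega)
  apply le_antisymm
  · rw [ext_le_iff]
    intro c hc v hv
    refine multi_span (exteriorPower.ιMulti F j).toMultilinearMap _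
      (fun k => {y | ∃ m : ℤ, m ≤ c k - w ∧ y ∈ h.eigenspace (m : F)}) ?_ v ?_
    · intro u hu
      choose d hdc hd using hu
      refine eig_le_hFil (der j h) (m := ∑ k, d k) ?_ (der_eig h d u hd)
      calc ∑ k, d k ≤ ∑ k, (c k - w) := Finset.sum_le_sum fun k _ => hdc k
        _ = i - w * j := by simp [hc, mul_comm]
    · intro k
      rw [← iSup_span_union]
      have := hv k
      rwa [hW] at this
  · refine iSup_le fun m => iSup_le fun hm => ?_
    rw [eig_der_eq j h ht]
    refine Submodule.span_le.mpr ?_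
    rintro _ ⟨d, v, hd, hv, rfl⟩
    refine ext_mono hj hmono (show m + w * j ≤ i by omega) ?_
    refine wedge_mem_ext (fun k => d k + w) ?_ v fun k => ?_
    · simp [Finset.sum_add_distrib, hd, mul_comm]
    · rw [hW]
      exact eig_le_hFil h (by omega) (hv k)

lemma wedge_map (j : ℕ) (A : Module.End F V) (v : Fin j → V) :
    exteriorPower.map j A (wedge F j v) = wedge F j fun k => A (v k) := by
  rw [wedge_eq, exteriorPower.map_apply_ιMulti]
  rfl

lemma unip_approx [CharZero F] {j : ℕ} (hj : 0 < j) {W : ℤ → Submodule F V} (hW : Monotone W)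
    (n : Module.End F V) (hn : ∀ i, ∀ v ∈ W i, n v ∈ W (i - 2)) (i : ℤ) (x : ⋀[F]^j V)
    (hx : x ∈ extPowerFiltration F j W i) :
    (((exteriorPower.map j (1 + n) : Module.End F (⋀[F]^j V)) - 1) - der j n) x ∈ extPowerFiltration F j W (i - 3) := by
  suffices h : extPowerFiltration F j W i ≤ (extPowerFiltration F j W (i - 3)).comap
      (((exteriorPower.map j (1 + n) : Module.End F (⋀[F]^j V)) - 1) - der j n) from h hx
  rw [ext_le_iff]
  intro c hc v hv
  have hmono := ext_mono (F := F) hj hW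
  rw [Submodule.mem_comap]
  -- expansion along a set of coordinates
  have key : ∀ (A : Finset (Fin j)),
      (∀ (c : Fin j → ℤ) (v : Fin j → V), (∀ k, v k ∈ W (c k)) →
        wedge F j (A.piecewise (fun k => v k + n (v k)) v) - wedge F j v
          ∈ extPowerFiltration F j W (∑ k, c k - 2)) ∧
      (∀ (c : Fin j → ℤ) (v : Fin j → V), (∀ k, v k ∈ W (c k)) →
        wedge F j (A.piecewise (fun k => v k + n (v k)) v) - wedge F j v
          - ∑ k ∈ A, wedge F j (Function.update v k (n (v k)))
          ∈ extPowerFiltration F j W (∑ k, c k - 4)) := by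
    intro A
    induction A using Finset.induction_on with
    | empty => simp
    | insert k A hk ih =>
      obtain ⟨ih1, ih2⟩ := ih
      have split : ∀ v : Fin j → V, 
          wedge F j ((insert k A).piecewise (fun k => v k + n (v k)) v) =
          wedge F j (A.piecewise (fun k => v k + n (v k)) v) + 
          wedge F j (A.piecewise (fun l => Function.update v k (n (v k)) l + 
            n (Function.update v k (n (v k)) l)) (Function.update v k (n (v k)))) := by
        intro v
        rw [Finset.piecewise_insert, wedge_eq, (exteriorPower.ιMulti F j).map_update_add]
        congr 1
        · rw [wedge_eq]
          congr 1
          funext l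
          by_cases hl : l = k
          · subst hl; simp [hk]
          · simp [hl]
        · rw [wedge_eq]
          congr 1
          funext l
          by_cases hl : l = k
          · subst hl; simp [hk]
          · by_cases hlA : l ∈ A <;> simp [hl, hlA]
      have hupd : ∀ (c : Fin j → ℤ) (v : Fin j → V), (∀ k, v k ∈ W (c k)) →
          ∀ l, Function.update v k (n (v k)) l ∈ W (Function.update c k (c k - 2) l) := by
        intro c v hv l
        by_cases hl : l = k
        · subst hl; simpa using hn _ _ (hv l)
        · simpa [hl] using hv l
      have hsum : ∀ c : Fin j → ℤ, ∑ l, Function.update c k (c k - 2) l = ∑ l, c l - 2 := by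
        intro c
        rw [Finset.sum_update_of_mem (Finset.mem_univ k),
          ← Finset.add_sum_erase _ c (Finset.mem_univ k), Finset.sdiff_singleton_eq_erase]
        ring
      constructor
      · intro c v hv
        rw [split, add_sub_right_comm]
        refine add_mem (ih1 c v hv) ?_
        have h1 := ih1 _ _ (hupd c v hv)
        rw [hsum] at h1
        have h2 := wedge_mem_ext _ (hsum c) _ (hupd c v hv)
        have := add_mem (hmono (by omega) h1) h2
        rwa [sub_add_cancel] at this
      · intro c v hv
        have h1 := ih1 _ _ (hupd c v hv)
        rw [hsum] at h1
        have h2 := add_mem (ih2 c v hv) (hmono (by omega) h1)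
        rw [split, Finset.sum_insert hk]
        convert h2 using 1
        abel
  have h1 := (key Finset.univ).2 c v hv
  rw [hc] at h1
  simp only [LinearMap.sub_apply, wedge_map, der_wedge, Module.End.one_apply]
  refine hmono (show i - 4 ≤ i - 3 by omega) ?_
  convert h1 using 4
  simp

end Ext

section SS

variable {F V Y : Type*} [Field F] [AddCommGroup V] [Module F V] [AddCommGroup Y] [Module F Y]

/-- Precomposition of multilinear maps. -/
noncomputable def pull {j : ℕ} (g : Fin j → Module.End F V) :
    Module.End F (MultilinearMap F (fun _ : Fin j => V) Y) :=
  MultilinearMap.compLinearMapₗ g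

lemma pull_apply {j : ℕ} (g : Fin j → Module.End F V)
    (φ : MultilinearMap F (fun _ : Fin j => V) Y) (v : Fin j → V) :
    pull g φ v = φ fun k => g k (v k) := rfl

lemma pull_mul {j : ℕ} (g g' : Fin j → Module.End F V) :
    (pull g * pull g' : Module.End F (MultilinearMap F (fun _ : Fin j => V) Y)) =
      pull fun k => g' k * g k := rfl

lemma pull_single_aeval {j : ℕ} (k : Fin j) (a : Module.End F V) (p : Polynomial F) :
    Polynomial.aeval (pull (Function.update 1 k a) :
      Module.End F (MultilinearMap F (fun _ : Fin j => V) Y)) p =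
    pull (Function.update 1 k (Polynomial.aeval a p)) := by
  let L : Module.End F V →ₗ[F] Module.End F (MultilinearMap F (fun _ : Fin j => V) Y) :=
    { toFun := fun b => pull (Function.update 1 k b)
      map_add' := by
        intro b c
        ext φ v
        simp only [pull_apply, LinearMap.add_apply, MultilinearMap.add_apply]
        have : ∀ b : Module.End F V, (fun l => (Function.update 1 k b : Fin j → Module.End F V) l (v l))
            = Function.update v k (b (v k)) := by
          intro b; funext l
          by_cases hl : l = k
          · subst hl; simp
          · simp [hl]
        rw [this, this, this, LinearMap.add_apply, φ.map_update_add]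
      map_smul' := by
        intro r b
        ext φ v
        simp only [pull_apply, LinearMap.smul_apply, MultilinearMap.smul_apply, RingHom.id_apply]
        have : ∀ b : Module.End F V, (fun l => (Function.update 1 k b : Fin j → Module.End F V) l (v l))
            = Function.update v k (b (v k)) := by
          intro b; funext l
          by_cases hl : l = k
          · subst hl; simp
          · simp [hl]
        rw [this, this, LinearMap.smul_apply, φ.map_update_smul] }
  have hone : L 1 = 1 := by
    ext φ v
    change φ _ = φ v
    congr 1
    funext l
    by_cases hl : l = k
    · subst hl; simp
    · simp [hl]
  have hpow : ∀ i : ℕ, L (a ^ i) = (L a) ^ i := by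
    intro i
    induction i with
    | zero => simpa using hone
    | succ i ih =>
      rw [pow_succ (L a), ← ih]
      change pull _ = pull _ * pull _
      rw [pull_mul]
      congr 1
      funext l
      by_cases hl : l = k
      · subst hl; simp [pow_succ']
      · simp [hl]
  change Polynomial.aeval (L a) p = L (Polynomial.aeval a p)
  rw [Polynomial.aeval_eq_sum_range, Polynomial.aeval_eq_sum_range, map_sum]
  exact Finset.sum_congr rfl fun i _ => by rw [map_smul, hpow]

lemma pull_semisimple [CharZero F] [FiniteDimensional F V] [FiniteDimensional F Y] {j : ℕ}
    (a : Module.End F V) (ha : a.IsSemisimple) :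
    (pull (fun _ => a) : Module.End F (MultilinearMap F (fun _ : Fin j => V) Y)).IsSemisimple := by
  classical
  have h1 : ∀ k, (pull (Function.update 1 k a) :
      Module.End F (MultilinearMap F (fun _ : Fin j => V) Y)).IsSemisimple := by
    intro k
    refine Module.End.isSemisimple_of_squarefree_aeval_eq_zero ha.minpoly_squarefree ?_
    rw [pull_single_aeval, minpoly.aeval]
    ext φ v
    simp only [pull_apply, LinearMap.zero_apply, MultilinearMap.zero_apply]
    exact φ.map_coord_zero k (by simp)
  have h2 : ∀ A : Finset (Fin j), (pull (fun l => if l ∈ A then a else 1) :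
      Module.End F (MultilinearMap F (fun _ : Fin j => V) Y)).IsSemisimple := by
    intro A
    induction A using Finset.induction_on with
    | empty => exact Module.End.isSemisimple_id
    | insert k A hk ih =>
      have e1 : (pull (fun l => if l ∈ A then a else 1) * pull (Function.update 1 k a) :
          Module.End F (MultilinearMap F (fun _ : Fin j => V) Y)) =
          pull (fun l => if l ∈ insert k A then a else 1) := by
        rw [pull_mul]
        congr 1
        funext l
        by_cases hl : l = k
        · subst hl; simp [hk]
        · by_cases hlA : l ∈ A <;> simp [hl, hlA]
      have e2 : (pull (Function.update 1 k a) * pull (fun l => if l ∈ A then a else 1) :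
          Module.End F (MultilinearMap F (fun _ : Fin j => V) Y)) =
          pull (fun l => if l ∈ insert k A then a else 1) := by
        rw [pull_mul]
        congr 1
        funext l
        by_cases hl : l = k
        · subst hl; simp [hk]
        · by_cases hlA : l ∈ A <;> simp [hl, hlA]
      rw [← e1]
      exact Module.End.IsSemisimple.mul_of_commute (e1.trans e2.symm) ih (h1 k)
  simpa using h2 Finset.univ

lemma exists_sqfree [CharZero F] [FiniteDimensional F V] [FiniteDimensional F Y] {j : ℕ}
    (a : Module.End F V) (ha : a.IsSemisimple) (T : Module.End F Y)
    (ω : MultilinearMap F (fun _ : Fin j => V) Y)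
    (hω : ∀ v, ω (fun k => a (v k)) = T (ω v)) :
    ∃ p : Polynomial F, Squarefree p ∧ ∀ v, Polynomial.aeval T p (ω v) = 0 := by
  have hS := pull_semisimple (Y := Y) (j := j) a ha
  set S := (pull (fun _ => a) :
    Module.End F (MultilinearMap F (fun _ : Fin j => V) Y)) with hSdef
  refine ⟨minpoly F S, hS.minpoly_squarefree, ?_⟩
  intro v
  have hpow : ∀ (i : ℕ), (S ^ i) ω = (T ^ i).compMultilinearMap ω := by
    intro i
    induction i with
    | zero => ext v; rfl
    | succ i ih =>
      rw [pow_succ', Module.End.mul_apply, ih]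
      ext1 v
      rw [pow_succ]
      change (T ^ i) (ω fun k => a (v k)) = (T ^ i) (T (ω v))
      rw [hω]
  have h0 : (Polynomial.aeval S (minpoly F S)) ω v = 0 := by
    rw [minpoly.aeval]; rfl
  rw [← h0, Polynomial.aeval_eq_sum_range, Polynomial.aeval_eq_sum_range]
  simp only [LinearMap.sum_apply, LinearMap.smul_apply, MultilinearMap.sum_apply,
    MultilinearMap.smul_apply, hpow]
  rfl

lemma semisimple_of_sqfree [FiniteDimensional F Y] (T : Module.End F Y) (p : Polynomial F)
    (hp : Squarefree p) (h : Polynomial.aeval T p = 0) : T.IsSemisimple :=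
  Module.End.isSemisimple_of_squarefree_aeval_eq_zero hp h

lemma commute_sub_one (T A : Module.End F Y) (h : T * A = A * T) : Commute T (A - 1) :=
  Commute.sub_right h (Commute.one_right _)

lemma mul_sub_one_add (T A : Module.End F Y) : T * (A - 1) + T = T * A := by
  rw [mul_sub, mul_one, sub_add_cancel]

lemma map_semisimple [CharZero F] [FiniteDimensional F V] (j : ℕ)
    (a : Module.End F V) (ha : a.IsSemisimple) :
    Module.End.IsSemisimple (exteriorPower.map j a : Module.End F (⋀[F]^j V)) := by
  obtain ⟨p, hp, h⟩ := exists_sqfree a ha (exteriorPower.map j a : Module.End F (⋀[F]^j V))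
    (exteriorPower.ιMulti F j).toMultilinearMap (fun v => (wedge_map j a v).symm)
  refine semisimple_of_sqfree _ p hp ?_
  apply ext_hom_ext
  intro v
  exact h v

end SS

lemma extPow_map_mul {F V : Type*} [Field F] [AddCommGroup V] [Module F V] (j : ℕ)
    (a b : Module.End F V) :
    (exteriorPower.map j (a * b) : Module.End F (⋀[F]^j V)) =
      (exteriorPower.map j a : Module.End F (⋀[F]^j V)) * exteriorPower.map j b := by
  apply ext_hom_ext
  intro v
  rw [Module.End.mul_apply, wedge_map, wedge_map, wedge_map]
  rfl

lemma wf_nilpotent {F V : Type*} [Field F] [AddCommGroup V] [Module F V] {N : Module.End F V}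
    {w : ℤ} {W : ℤ → Submodule F V} (h : IsWeightFiltration N w W) : IsNilpotent N := by
  obtain ⟨-, ⟨a, ha⟩, ⟨b, hb⟩, hN, -⟩ := h
  refine ⟨a.natAbs + b.natAbs, ?_⟩
  ext v
  have := wf_pow_map hN (a.natAbs + b.natAbs) b v (by rw [hb b le_rfl]; trivial)
  rw [ha _ (by omega)] at this
  simpa using this



/-- Let `M` be an automorphism of a finite dimensional vector space `V` over a field of
characteristic zero, with Jordan–Chevalley decomposition `M = Ms + Mn`, and let `W` be the
weight filtration centered at `w` associated to `Mn`. Fix `j > 0` and let `Mj = ∧^j M` be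
the endomorphism of `⋀^j V` induced by `M` (determined by
`Mj (v₁ ∧ ⋯ ∧ v_j) = M v₁ ∧ ⋯ ∧ M v_j`). If `∧^j M = T + P` is a Jordan–Chevalley
decomposition (`T` semisimple, `P` nilpotent, commuting), then the weight filtration on
`⋀^j V` centered at `w · j` associated to `P` is the exterior power filtration `∧^j W`. -/
theorem weightFiltration_exteriorPower_jordanChevalley
    (F V : Type*) [Field F] [CharZero F] [AddCommGroup V] [Module F V]
    [FiniteDimensional F V]
    (M Ms Mn : V →ₗ[F] V) (hMbij : Function.Bijective M)
    (hM : M = Ms + Mn) (hMs : Module.End.IsSemisimple Ms) (hMn : IsNilpotent Mn)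
    (hMc : Commute Ms Mn)
    (w : ℤ) (W : ℤ → Submodule F V) (hW : IsWeightFiltration Mn w W)
    (j : ℕ) (hj : 0 < j)
    (Mj : ⋀[F]^j V →ₗ[F] ⋀[F]^j V)
    (hMj : ∀ v : Fin j → V, Mj (wedge F j v) = wedge F j fun k => M (v k))
    (T P : ⋀[F]^j V →ₗ[F] ⋀[F]^j V) (hTP : Mj = T + P)
    (hT : Module.End.IsSemisimple T) (hP : IsNilpotent P) (hTPc : Commute T P) :
    IsWeightFiltration P (w * j) (extPowerFiltration F j W) := by

  have hMu : IsUnit M := (Module.End.isUnit_iff M).mpr hMbij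
  have hcMMn : Commute Mn M := by
    rw [hM]; exact hMc.symm.add_right (Commute.refl Mn)
  have hMsu : IsUnit Ms := by
    have e : Ms = M + -Mn := by rw [hM]; abel
    rw [e]
    exact hMn.neg.isUnit_add_left_of_commute hMu hcMMn.neg_left
  obtain ⟨u, rfl⟩ := hMsu
  let R : Module.End F V := ((u⁻¹ : (Module.End F V)ˣ) : Module.End F V)
  have hRc : Commute R Mn := hMc.units_inv_left
  have hRinj : Function.Injective R := ((Module.End.isUnit_iff R).mp (Units.isUnit _)).1
  have huR : (u : Module.End F V) * R = 1 := u.mul_inv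
  have hRu : R * (u : Module.End F V) = 1 := u.inv_mul
  let n : Module.End F V := R * Mn
  have hMun : M = (u : Module.End F V) * (1 + n) := by
    rw [hM, mul_add, mul_one, ← mul_assoc, huR, one_mul]
  have hcun : Commute (u : Module.End F V) n := by
    have : Commute (u : Module.End F V) R := by
      unfold Commute SemiconjBy; rw [huR, hRu]
    exact this.mul_right hMc
  have hWn : IsWeightFiltration n w W :=
    wf_mul hW hRinj hRc fun i v hv => wf_commute hW hRc i v hv
  have hnn : IsNilpotent n := wf_nilpotent hWn
  obtain ⟨e, h, t⟩ := exists_sl2 n hnn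
  have hWh : W = fun i => hFil h (i - w) :=
    wf_unique hWn (t.weightFil w n _ (fun i => rfl) (by intro i v _; simp))
  have hG := fun i => ext_eq_hFil hj t.top w (W := W) (fun i => by rw [hWh]) i
  let T0 : Module.End F (⋀[F]^j V) := exteriorPower.map j (u : Module.End F V)
  let Q : Module.End F (⋀[F]^j V) := exteriorPower.map j (1 + n) - 1
  have hQ : IsWeightFiltration Q (w * j) (extPowerFiltration F j W) :=
    (der_sl2 j t).weightFil (w * j) Q _ hG
      (unip_approx hj hW.1 n fun i v hv => hWn.2.2.2.1 i (Submodule.mem_map_of_mem hv))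
  have hT0inj : Function.Injective T0 := by
    have h1 : (exteriorPower.map j R : Module.End F (⋀[F]^j V)) * T0 = 1 := by
      rw [← extPow_map_mul, hRu]
      exact exteriorPower.map_id
    intro x y hxy
    have h2 := congrArg (exteriorPower.map j R : Module.End F (⋀[F]^j V)) hxy
    rwa [← Module.End.mul_apply, ← Module.End.mul_apply, h1] at h2
  have hT0Q : Commute T0 Q := by
    refine commute_sub_one T0 _ ?_
    rw [← extPow_map_mul, ← extPow_map_mul, ((Commute.one_right _).add_right hcun).eq]
  have hT0W : ∀ i, ∀ x ∈ extPowerFiltration F j W i, T0 x ∈ extPowerFiltration F j W i := by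
    intro i
    suffices hs : extPowerFiltration F j W i ≤ (extPowerFiltration F j W i).comap T0 from hs
    rw [ext_le_iff]
    intro c hc v hv
    rw [Submodule.mem_comap, wedge_map]
    exact wedge_mem_ext c hc _ fun k => wf_commute hW hMc _ _ (hv k)
  have hfin := wf_mul hQ hT0inj hT0Q hT0W
  have hMj' : Mj = T0 * Q + T0 := by
    have : T0 * Q + T0 = exteriorPower.map j M := by
      rw [hMun]
      exact (mul_sub_one_add T0 _).trans (extPow_map_mul j _ _).symm
    rw [this]
    apply ext_hom_ext
    intro v
    rw [hMj, wedge_map]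
  have huniq := Module.End.isNilpotent_isSemisimple_unique hP hT (wf_nilpotent hfin)
    (map_semisimple j (u : Module.End F V) hMs) hTPc.symm
    ((Commute.refl T0).mul_right hT0Q).symm
    (by rw [add_comm, ← hTP, hMj'])
  rw [huniq.1]
  exact hfin
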